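/- Let a ∈ ℝ^{m-1}, let v ∈ ℝ^m with |v| ≤ 1, and let δ > 0. Then ∫_{{t′ ∈ ℝ^{m-1} : |t′−a| > δ}} ∫_{𝕊^{m-1}} P_H(x,(t′,0),u,v) dS(u) dt′ → 0 as x → (a,0) with x ∈ ℝ^m_+. -/

import Mathlib

noncomputable section

open MeasureTheory Metric Filter Topology
open scoped RealInnerProductSpace

/-- `ℝ^m` as a Euclidean space. -/
abbrev Evec (m : ℕ) : Type := EuclideanSpace ℝ (Fin m)

/-- Partial derivative in the `i`-th coordinate direction. -/
def pdv {m : ℕ} (i : Fin m) (f : Evec m → ℝ) (x : Evec m) : ℝ :=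
  fderiv ℝ f x (EuclideanSpace.single i 1)

/-- Euclidean Laplacian on `ℝ^m`. -/
def lapl {m : ℕ} (f : Evec m → ℝ) (x : Evec m) : ℝ :=
  ∑ i : Fin m, pdv i (pdv i f) x

/-- `p` is a real-valued polynomial function on `ℝ^m`, homogeneous of degree `k` and
harmonic; i.e. `p ∈ ℋ_k`. -/
def IsHk (m k : ℕ) (p : Evec m → ℝ) : Prop :=
  (∃ P : MvPolynomial (Fin m) ℝ, ∀ x : Evec m, p x = MvPolynomial.eval (fun i => x i) P) ∧
  (∀ (c : ℝ) (x : Evec m), p (c • x) = c ^ k * p x) ∧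
  (∀ x : Evec m, lapl p x = 0)

/-- The surface measure `dS` on the unit sphere `𝕊^{m-1}`, as a measure on `ℝ^m`. -/
def sphereM (m : ℕ) : Measure (Evec m) :=
  Measure.map Subtype.val ((volume : Measure (Evec m)).toSphere)

/-- `ω_m`, the surface area of the unit sphere `𝕊^{m-1}`. -/
def omegaS (m : ℕ) : ℝ := (sphereM m Set.univ).toReal

/-- The constant `c_{m,k} = 2(m+2k-2)/((m-2)ω_m)`. -/
def cmk (m k : ℕ) : ℝ := 2 * ((m : ℝ) + 2 * k - 2) / (((m : ℝ) - 2) * omegaS m)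

/-- The reflection `R_a(u) = u - 2⟨a,u⟩a/|a|²` (in Clifford notation `a u a/|a|²`). -/
def reflv {m : ℕ} (a u : Evec m) : Evec m :=
  u - (2 * ⟪a, u⟫ / ‖a‖ ^ 2) • a

/-- `dim ℋ_k`. -/
def hdim (m k : ℕ) : ℕ :=
  Nat.choose (m + k - 1) (m - 1) - Nat.choose (m + k - 3) (m - 1)

/-- `Z` is the reproducing kernel `Z_k` of `ℋ_k` on the unit sphere: a symmetric,
rotation invariant kernel, bounded by `dim ℋ_k` on the unit ball, belonging to `ℋ_k`
in the first variable and reproducing elements of `ℋ_k` from their spherical values. -/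
def IsZk (m k : ℕ) (Z : Evec m → Evec m → ℝ) : Prop :=
  (∀ v : Evec m, IsHk m k (fun u => Z u v)) ∧
  (∀ p : Evec m → ℝ, IsHk m k p → ∀ v : Evec m, (∫ u, Z u v * p u ∂(sphereM m)) = p v) ∧
  (∀ u v : Evec m, Z u v = Z v u) ∧
  (∀ u v : Evec m, ‖u‖ ≤ 1 → ‖v‖ ≤ 1 → |Z u v| ≤ (hdim m k : ℝ)) ∧
  (∀ (A : Evec m ≃ₗᵢ[ℝ] Evec m) (u v : Evec m), Z (A u) (A v) = Z u v)

/-- The point `(x', y) ∈ ℝ^{d+1}` with first `d` coordinates `x'` and last coordinate `y`. -/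
def upP (d : ℕ) (x' : Evec d) (y : ℝ) : Evec (d + 1) :=
  (EuclideanSpace.equiv (Fin (d + 1)) ℝ).symm
    (Fin.snoc (⇑(EuclideanSpace.equiv (Fin d) ℝ) x') y)

/-- The first `d` coordinates of a point of `ℝ^{d+1}`. -/
def downP (d : ℕ) (x : Evec (d + 1)) : Evec d :=
  (EuclideanSpace.equiv (Fin d) ℝ).symm (fun i => x (Fin.castSucc i))

/-- The last coordinate of a point of `ℝ^{d+1}`. -/
def lastP (d : ℕ) (x : Evec (d + 1)) : ℝ := x (Fin.last d)

/-- The Poisson kernel `P_H` for bosonic Laplacians in the upper half-space `ℝ^{d+1}_+`,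
`P_H(x,t,u,v) = c_{m,k} (y/|x-t|^m) Z_k(R_{x-t}(u), v)` with `m = d+1`, `x = (x',y)`,
`t = (t',0)`. -/
def PH (d k : ℕ) (Z : Evec (d + 1) → Evec (d + 1) → ℝ) (x' : Evec d) (y : ℝ)
    (t' : Evec d) (u v : Evec (d + 1)) : ℝ :=
  cmk (d + 1) k * (y / ‖upP d x' y - upP d t' 0‖ ^ (d + 1)) *
    Z (reflv (upP d x' y - upP d t' 0) u) v

/-- The Poisson integral `P_H[f]` in the upper half-space. -/
def PHint (d k : ℕ) (Z : Evec (d + 1) → Evec (d + 1) → ℝ)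
    (f : Evec d → Evec (d + 1) → ℝ) (x' : Evec d) (y : ℝ) (v : Evec (d + 1)) : ℝ :=
  ∫ t' : Evec d, (∫ u, PH d k Z x' y t' u v * f t' u ∂(sphereM (d + 1)))

/-- The Poisson kernel `P_B` for bosonic Laplacians in the unit ball. -/
def PB (m k : ℕ) (Z : Evec m → Evec m → ℝ) (x ζ ω ν : Evec m) : ℝ :=
  (cmk m k / 2) * ((1 - ‖x‖ ^ 2) / ‖x - ζ‖ ^ m) * Z (reflv (x - ζ) ω) ν

/-- The Poisson integral `P_B[h]` in the unit ball. -/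
def PBint (m k : ℕ) (Z : Evec m → Evec m → ℝ) (h : Evec m → Evec m → ℝ)
    (x ν : Evec m) : ℝ :=
  ∫ ζ, (∫ ω, PB m k Z x ζ ω ν * h ζ ω ∂(sphereM m)) ∂(sphereM m)

/-- Partial derivative in the first (`x`) variable. -/
def pd1 {m : ℕ} (i : Fin m) (f : Evec m → Evec m → ℝ) : Evec m → Evec m → ℝ :=
  fun x u => fderiv ℝ (fun x₁ => f x₁ u) x (EuclideanSpace.single i 1)

/-- Partial derivative in the second (`u`) variable. -/
def pd2 {m : ℕ} (i : Fin m) (f : Evec m → Evec m → ℝ) : Evec m → Evec m → ℝ :=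
  fun x u => fderiv ℝ (fun u₁ => f x u₁) u (EuclideanSpace.single i 1)

/-- The bosonic Laplacian `𝒟_k`. -/
def Dk (m k : ℕ) (f : Evec m → Evec m → ℝ) : Evec m → Evec m → ℝ := fun x u =>
  (∑ i : Fin m, pd1 i (pd1 i f) x u)
    - (4 / ((m : ℝ) + 2 * k - 2)) *
        ∑ i : Fin m, ∑ j : Fin m, u i * pd1 i (pd2 j (pd1 j f)) x u
    + (4 * ‖u‖ ^ 2 / (((m : ℝ) + 2 * k - 2) * ((m : ℝ) + 2 * k - 4))) *
        ∑ i : Fin m, ∑ j : Fin m, pd2 i (pd1 i (pd2 j (pd1 j f))) x u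

/-- `f ∈ C²(Ω×𝔹^m, ℋ_k)`: twice continuously differentiable on `Ω × 𝔹^m` and, for each
fixed `x ∈ Ω`, coinciding in the second variable with an element of `ℋ_k`. -/
def C2Hk (m k : ℕ) (Ω : Set (Evec m)) (f : Evec m → Evec m → ℝ) : Prop :=
  ContDiffOn ℝ 2 (fun q : Evec m × Evec m => f q.1 q.2) (Ω ×ˢ ball (0 : Evec m) 1) ∧
  ∀ x ∈ Ω, ∃ q, IsHk m k q ∧ ∀ u ∈ closedBall (0 : Evec m) 1, f x u = q u

/-- The `L^p` norm `(∫_{ℝ^{m-1}} ∫_{𝕊^{m-1}} |f(x',u)|^p dS(u) dx')^{1/p}` (`m = d+1`),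
valued in `ℝ≥0∞`. -/
def lpH (d : ℕ) (p : ℝ) (f : Evec d → Evec (d + 1) → ℝ) : ENNReal :=
  (∫⁻ x' : Evec d, ∫⁻ u, ENNReal.ofReal (|f x' u| ^ p) ∂(sphereM (d + 1))) ^ (1 / p)

/-- `f ∈ L^p(ℝ^{m-1}×𝔹^m, ℋ_k)` (`m = d+1`). -/
def MemLpH (d k : ℕ) (p : ℝ) (f : Evec d → Evec (d + 1) → ℝ) : Prop :=
  Measurable (fun q : Evec d × Evec (d + 1) => f q.1 q.2) ∧
  (∀ x' : Evec d, ∃ q, IsHk (d + 1) k q ∧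
    ∀ u ∈ closedBall (0 : Evec (d + 1)) 1, f x' u = q u) ∧
  lpH d p f < ⊤

/-- The `L^p` norm `(∫_{𝕊^{m-1}} ∫_{𝕊^{m-1}} |h(ζ,ω)|^p dS(ω) dS(ζ))^{1/p}`,
valued in `ℝ≥0∞`. -/
def lpS (m : ℕ) (p : ℝ) (h : Evec m → Evec m → ℝ) : ENNReal :=
  (∫⁻ ζ, ∫⁻ ω, ENNReal.ofReal (|h ζ ω| ^ p) ∂(sphereM m) ∂(sphereM m)) ^ (1 / p)

/-- `h ∈ L^p(𝕊^{m-1}×𝔹^m, ℋ_k)`. -/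
def MemLpS (m k : ℕ) (p : ℝ) (h : Evec m → Evec m → ℝ) : Prop :=
  Measurable (fun q : Evec m × Evec m => h q.1 q.2) ∧
  (∀ ζ : Evec m, ‖ζ‖ = 1 → ∃ q, IsHk m k q ∧
    ∀ ω ∈ closedBall (0 : Evec m) 1, h ζ ω = q ω) ∧
  lpS m p h < ⊤

/-- Iterated partial derivative `D_x^α` in the first variable, for a multi-index `α ∈ ℕ^m`. -/
def Dx {m : ℕ} (α : Fin m → ℕ) (f : Evec m → Evec m → ℝ) : Evec m → Evec m → ℝ :=
  (List.finRange m).foldr (fun i g => (pd1 i)^[α i] g) f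

/-- Iterated partial derivative `D_ν^β` in the second variable, for a multi-index `β ∈ ℕ^m`. -/
def Dv {m : ℕ} (β : Fin m → ℕ) (f : Evec m → Evec m → ℝ) : Evec m → Evec m → ℝ :=
  (List.finRange m).foldr (fun i g => (pd2 i)^[β i] g) f

/-!
The Poisson kernel is `O(y / |x - t|^m)` on `ℝ^{m-1}`, because `R_{x-t}` preserves the unit sphere,
where the kernel `Z_k(·, v)` is bounded. Once `|x' - a| ≤ δ / 2`, every `t'` with `|t' - a| > δ`
satisfies `1 + |t' - a| ≤ C_δ |x' - t'|`, so the integrand is dominated by `y` times the integrable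
function `(1 + |t' - a|)^{-m}`, and the integral is `O(y)`.
-/

section FarIntegral

variable {E F : Type*} [NormedAddCommGroup E] [NormedAddCommGroup F]

lemma one_add_norm_sub_le_mul_norm_sub {a x t : E} {δ : ℝ} (hδ : 0 < δ)
    (hx : ‖x - a‖ ≤ δ / 2) (ht : δ < ‖t - a‖) :
    1 + ‖t - a‖ ≤ 2 * (1 + δ⁻¹) * ‖x - t‖ := by
  have htri : ‖t - a‖ ≤ ‖x - t‖ + ‖x - a‖ := by
    rw [norm_sub_rev x t]
    exact norm_sub_le_norm_sub_add_norm_sub t x a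
  have hhalf : ‖t - a‖ ≤ 2 * ‖x - t‖ := by linarith
  have hone : 1 ≤ δ⁻¹ * ‖t - a‖ := by
    rw [inv_mul_eq_div, one_le_div hδ]
    exact ht.le
  calc 1 + ‖t - a‖ ≤ (1 + δ⁻¹) * ‖t - a‖ := by linarith
    _ ≤ (1 + δ⁻¹) * (2 * ‖x - t‖) := by gcongr
    _ = 2 * (1 + δ⁻¹) * ‖x - t‖ := by ring

lemma norm_le_of_rpow_norm_sub_mul_le {a x t : E} {w : F} {r δ ε : ℝ} (hr : 0 ≤ r) (hδ : 0 < δ)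
    (hx : ‖x - a‖ ≤ δ / 2) (ht : δ < ‖t - a‖) (hw : ‖x - t‖ ^ r * ‖w‖ ≤ ε) :
    ‖w‖ ≤ ε * (2 * (1 + δ⁻¹)) ^ r * (1 + ‖t - a‖) ^ (-r) := by
  have hpos : 0 < 1 + ‖t - a‖ := by positivity
  rw [Real.rpow_neg hpos.le, ← div_eq_mul_inv, le_div_iff₀ (Real.rpow_pos_of_pos hpos r)]
  calc ‖w‖ * (1 + ‖t - a‖) ^ r
      ≤ ‖w‖ * (2 * (1 + δ⁻¹) * ‖x - t‖) ^ r := by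
        gcongr
        exact one_add_norm_sub_le_mul_norm_sub hδ hx ht
    _ = ‖x - t‖ ^ r * ‖w‖ * (2 * (1 + δ⁻¹)) ^ r := by
        rw [Real.mul_rpow (by positivity) (norm_nonneg _)]
        ring
    _ ≤ ε * (2 * (1 + δ⁻¹)) ^ r := by gcongr

variable [NormedSpace ℝ E] [FiniteDimensional ℝ E] [MeasurableSpace E] [BorelSpace E]
  [NormedSpace ℝ F] (μ : Measure E) [μ.IsAddHaarMeasure]

lemma norm_setIntegral_le_of_rpow_norm_sub_mul_le {g : E → F} {a x : E} {r δ ε : ℝ}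
    (hr : Module.finrank ℝ E < r) (hδ : 0 < δ) (hx : ‖x - a‖ ≤ δ / 2)
    (hg : ∀ t, δ < ‖t - a‖ → ‖x - t‖ ^ r * ‖g t‖ ≤ ε) :
    ‖∫ t in {t | δ < ‖t - a‖}, g t ∂μ‖ ≤
      ε * (2 * (1 + δ⁻¹)) ^ r * ∫ t in {t | δ < ‖t - a‖}, (1 + ‖t - a‖) ^ (-r) ∂μ := by
  have hint : Integrable (fun t => (1 + ‖t - a‖) ^ (-r)) μ :=
    (integrable_one_add_norm hr).comp_sub_right a
  have hmeas : MeasurableSet {t : E | δ < ‖t - a‖} :=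
    measurableSet_lt measurable_const (by fun_prop)
  rw [← integral_const_mul]
  refine norm_integral_le_of_norm_le (hint.integrableOn.const_mul _) ?_
  filter_upwards [ae_restrict_mem hmeas] with t ht
  exact norm_le_of_rpow_norm_sub_mul_le ((Nat.cast_nonneg _).trans hr.le) hδ hx ht (hg t ht)

-- The decay bound is multiplied out because `‖x i - t‖ ^ (-r)` is `0`, not `∞`, at `t = x i`.
theorem tendsto_setIntegral_zero_of_rpow_norm_sub_mul_le {ι : Type*} {l : Filter ι}
    {g : ι → E → F} {x : ι → E} {ε : ι → ℝ} {a : E} {r δ : ℝ}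
    (hr : Module.finrank ℝ E < r) (hδ : 0 < δ) (hx : Tendsto x l (𝓝 a)) (hε : Tendsto ε l (𝓝 0))
    (hg : ∀ᶠ i in l, ∀ t, δ < ‖t - a‖ → ‖x i - t‖ ^ r * ‖g i t‖ ≤ ε i) :
    Tendsto (fun i => ∫ t in {t | δ < ‖t - a‖}, g i t ∂μ) l (𝓝 0) := by
  have hnear : ∀ᶠ i in l, ‖x i - a‖ ≤ δ / 2 := by
    filter_upwards [hx.eventually (closedBall_mem_nhds a (half_pos hδ))] with i hi
    rwa [← mem_closedBall_iff_norm]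
  refine squeeze_zero_norm' (a := fun i => ε i * (2 * (1 + δ⁻¹)) ^ r *
    ∫ t in {t | δ < ‖t - a‖}, (1 + ‖t - a‖) ^ (-r) ∂μ) ?_ ?_
  · filter_upwards [hnear, hg] with i hxi hgi
    exact norm_setIntegral_le_of_rpow_norm_sub_mul_le μ hr hδ hxi hgi
  · simpa only [zero_mul] using (hε.mul_const _).mul_const _

end FarIntegral

lemma IsHk.continuous {m k : ℕ} {p : Evec m → ℝ} (hp : IsHk m k p) : Continuous p := by
  obtain ⟨P, hP⟩ := hp.1
  rw [funext hP]
  exact (MvPolynomial.continuous_eval P).comp (by fun_prop)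

lemma reflv_eq_reflection {m : ℕ} (a u : Evec m) :
    reflv a u = (ℝ ∙ a)ᗮ.reflection u := by
  rw [Submodule.reflection_orthogonal_apply, Submodule.reflection_singleton_apply, reflv, neg_sub,
    two_smul, ← add_smul, ← add_div, ← two_mul]
  rfl

lemma norm_reflv {m : ℕ} (a u : Evec m) : ‖reflv a u‖ = ‖u‖ := by
  rw [reflv_eq_reflection, LinearIsometryEquiv.norm_map]

instance isFiniteMeasure_sphereM (m : ℕ) : IsFiniteMeasure (sphereM m) := by
  unfold sphereM
  infer_instance

lemma ae_norm_eq_one_sphereM (m : ℕ) : ∀ᵐ u ∂sphereM m, ‖u‖ = 1 := by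
  rw [sphereM, ae_map_iff measurable_subtype_coe.aemeasurable
    (measurableSet_eq_fun measurable_norm measurable_const)]
  exact .of_forall norm_eq_of_mem_sphere

lemma norm_integral_comp_reflv_le {F : Type*} [NormedAddCommGroup F] [NormedSpace ℝ F] {m : ℕ}
    {f : Evec m → F} {B : ℝ} (hf : ∀ u ∈ sphere (0 : Evec m) 1, ‖f u‖ ≤ B) (b : Evec m) :
    ‖∫ u, f (reflv b u) ∂sphereM m‖ ≤ B * omegaS m := by
  refine norm_integral_le_of_norm_le_const ?_
  filter_upwards [ae_norm_eq_one_sphereM m] with u hu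
  exact hf _ (by rw [mem_sphere_zero_iff_norm, norm_reflv, hu])

lemma norm_sub_le_norm_upP_sub_upP {d : ℕ} (x t : Evec d) (y s : ℝ) :
    ‖x - t‖ ≤ ‖upP d x y - upP d t s‖ := by
  refine (pow_le_pow_iff_left₀ (norm_nonneg _) (norm_nonneg _) two_ne_zero).mp ?_
  rw [EuclideanSpace.norm_sq_eq, EuclideanSpace.norm_sq_eq, Fin.sum_univ_castSucc]
  simp only [upP, PiLp.sub_apply, EuclideanSpace.equiv, PiLp.continuousLinearEquiv_symm_apply,
    PiLp.continuousLinearEquiv_apply, Fin.snoc_castSucc, Fin.snoc_last]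
  exact le_add_of_nonneg_right (sq_nonneg _)

lemma pow_norm_sub_mul_norm_integral_poisson_le {d : ℕ} (c : ℝ) {f : Evec (d + 1) → ℝ} {B : ℝ}
    (hf : ∀ u ∈ sphere (0 : Evec (d + 1)) 1, ‖f u‖ ≤ B) (x t : Evec d) (y : ℝ) :
    ‖x - t‖ ^ (d + 1) * ‖∫ u, c * (y / ‖upP d x y - upP d t 0‖ ^ (d + 1)) *
      f (reflv (upP d x y - upP d t 0) u) ∂sphereM (d + 1)‖ ≤ |c| * |y| * (B * omegaS (d + 1)) := by
  set b := upP d x y - upP d t 0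
  set J := ‖∫ u, f (reflv b u) ∂sphereM (d + 1)‖
  have hpow : ‖x - t‖ ^ (d + 1) / ‖b‖ ^ (d + 1) ≤ 1 :=
    div_le_one_of_le₀ (by gcongr; exact norm_sub_le_norm_upP_sub_upP x t y 0) (by positivity)
  rw [integral_const_mul, norm_mul, norm_mul, norm_div, norm_pow, norm_norm, Real.norm_eq_abs,
    Real.norm_eq_abs]
  calc ‖x - t‖ ^ (d + 1) * (|c| * (|y| / ‖b‖ ^ (d + 1)) * J)
      = ‖x - t‖ ^ (d + 1) / ‖b‖ ^ (d + 1) * (|c| * |y| * J) := by ring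
    _ ≤ |c| * |y| * J := mul_le_of_le_one_left (by positivity) hpow
    _ ≤ |c| * |y| * (B * omegaS (d + 1)) := by
        gcongr
        exact norm_integral_comp_reflv_le hf b

theorem stmt_1_general {d : ℕ} (c : ℝ) {f : Evec (d + 1) → ℝ}
    (hf : ContinuousOn f (sphere (0 : Evec (d + 1)) 1)) (a : Evec d) {δ : ℝ} (hδ : 0 < δ) :
    Tendsto
      (fun x : Evec d × ℝ =>
        ∫ t' in {t' : Evec d | δ < ‖t' - a‖},
          (∫ u, c * (x.2 / ‖upP d x.1 x.2 - upP d t' 0‖ ^ (d + 1)) *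
            f (reflv (upP d x.1 x.2 - upP d t' 0) u) ∂(sphereM (d + 1))))
      (𝓝 (a, 0)) (𝓝 0) := by
  obtain ⟨B, hB⟩ := (isCompact_sphere (0 : Evec (d + 1)) 1).exists_bound_of_continuousOn hf
  have hsmall : Tendsto (fun x : Evec d × ℝ => |c| * |x.2| * (B * omegaS (d + 1)))
      (𝓝 (a, 0)) (𝓝 0) :=
    Continuous.tendsto' (by fun_prop) _ _ (by simp)
  have hdim : (Module.finrank ℝ (Evec d) : ℝ) < (d + 1 : ℕ) := by simp
  refine tendsto_setIntegral_zero_of_rpow_norm_sub_mul_le volume hdim hδ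
    (continuous_fst.tendsto (a, 0)) hsmall (.of_forall fun x t _ => ?_)
  rw [Real.rpow_natCast]
  exact pow_norm_sub_mul_norm_integral_poisson_le c hB x.1 t x.2

/-- Proposition: approximation property of the Poisson kernel `P_H`. -/
theorem stmt_1 (d k : ℕ) (hm : 3 ≤ d + 1) (hk : 1 ≤ k)
    (Z : Evec (d + 1) → Evec (d + 1) → ℝ) (hZ : IsZk (d + 1) k Z)
    (a : Evec d) (v : Evec (d + 1)) (hv : ‖v‖ ≤ 1) (δ : ℝ) (hδ : 0 < δ) :
    Tendsto
      (fun x : Evec d × ℝ =>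
        ∫ t' in {t' : Evec d | δ < ‖t' - a‖},
          (∫ u, PH d k Z x.1 x.2 t' u v ∂(sphereM (d + 1))))
      (𝓝[{x : Evec d × ℝ | 0 < x.2}] (a, 0)) (𝓝 0) :=
  (stmt_1_general (cmk (d + 1) k) (hZ.1 v).continuous.continuousOn a hδ).mono_left
    nhdsWithin_le_nhds
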